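/- The Tsirelson bound is attained: there exists a quantum (2,2,2) probability table P with CHSH value E(P) = 2√2; in particular, since 2√2 > 2, there exists a quantum (2,2,2) probability table that is not classical. -/

import Mathlib

open Kronecker
open scoped ComplexOrder

/-- The outcome value: `true` denotes `+1`, `false` denotes `-1`. -/
noncomputable def sgn (a : Bool) : ℝ := if a then 1 else -1

/-- A (2,2,2) probability table: inputs `x y : Bool`, outcomes `a b : Bool`,
with nonnegative entries that sum to one for every choice of inputs. -/
def IsProbTable (P : Bool → Bool → Bool → Bool → ℝ) : Prop :=
  (∀ a b x y, 0 ≤ P a b x y) ∧ ∀ x y, ∑ a : Bool, ∑ b : Bool, P a b x y = 1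

/-- A probability table is classical if it admits a local hidden-variable model. -/
def IsClassical (P : Bool → Bool → Bool → Bool → ℝ) : Prop :=
  ∃ (n : ℕ), 0 < n ∧
    ∃ (q : Fin n → ℝ) (PA : Bool → Bool → Fin n → ℝ) (PB : Bool → Bool → Fin n → ℝ),
      (∀ l, 0 ≤ q l) ∧ (∑ l, q l) = 1 ∧
      (∀ a x l, 0 ≤ PA a x l) ∧ (∀ x l, ∑ a : Bool, PA a x l = 1) ∧
      (∀ b y l, 0 ≤ PB b y l) ∧ (∀ y l, ∑ b : Bool, PB b y l = 1) ∧
      (∀ a b x y, P a b x y = ∑ l, q l * PA a x l * PB b y l)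

/-- A probability table is quantum if it arises from local POVM measurements on a
bipartite quantum state. -/
def IsQuantum (P : Bool → Bool → Bool → Bool → ℝ) : Prop :=
  ∃ (dA dB : ℕ), 1 ≤ dA ∧ 1 ≤ dB ∧
    ∃ (ρ : Matrix (Fin dA × Fin dB) (Fin dA × Fin dB) ℂ)
      (E : Bool → Bool → Matrix (Fin dA) (Fin dA) ℂ)
      (F : Bool → Bool → Matrix (Fin dB) (Fin dB) ℂ),
      ρ.PosSemidef ∧ ρ.trace = 1 ∧
      (∀ x a, (E x a).PosSemidef) ∧ (∀ x, E x false + E x true = 1) ∧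
      (∀ y b, (F y b).PosSemidef) ∧ (∀ y, F y false + F y true = 1) ∧
      (∀ a b x y, (P a b x y : ℂ) = (ρ * (E x a ⊗ₖ F y b)).trace)

/-- The correlator `E_{x,y}(P) = ∑_{a,b} a·b·P(a,b|x,y)`. -/
noncomputable def correlator (P : Bool → Bool → Bool → Bool → ℝ) (x y : Bool) : ℝ :=
  ∑ a : Bool, ∑ b : Bool, sgn a * sgn b * P a b x y

/-- The CHSH value `E(P) = E_{0,0} + E_{0,1} + E_{1,0} − E_{1,1}`. -/
noncomputable def chsh (P : Bool → Bool → Bool → Bool → ℝ) : ℝ :=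
  correlator P false false + correlator P false true +
    correlator P true false - correlator P true true

/-!
Each correlator of a classical table is an average over the hidden variable of products of local
means in `[-1, 1]`, and the CHSH expression of four such local means is at most `2`.

For the quantum table, measure on a maximally entangled pair of qubits the spin observables of
angle `θ x` for the first party and `φ y` for the second. The correlators are `cos (θ x - φ y)`. At
`θ = (0, π/2)` and `φ = (π/4, -π/4)` three differences are `±π/4` and the one entering with a minus
sign is `3π/4`, so the CHSH value is `4 · √2/2 = 2√2`.
-/

section Classical

/-- The expectation `∑ a, a * p a` of a `±1`-valued outcome with weights `p`. -/
noncomputable def outcomeMean (p : Bool → ℝ) : ℝ := ∑ a, sgn a * p a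

theorem abs_outcomeMean_le_one {p : Bool → ℝ} (hp : ∀ a, 0 ≤ p a) (hsum : ∑ a, p a = 1) :
    |outcomeMean p| ≤ 1 := by
  rw [Fintype.sum_bool] at hsum
  have hmean : outcomeMean p = p true - p false := by simp [outcomeMean, sgn, sub_eq_add_neg]
  rw [hmean]
  exact abs_sub_le_of_nonneg_of_le (hp true) (by linarith [hp false]) (hp false)
    (by linarith [hp true])

theorem correlator_sum_mul_mul {ι : Type*} [Fintype ι] (q : ι → ℝ) (PA PB : Bool → Bool → ι → ℝ)
    (x y : Bool) :
    correlator (fun a b x y ↦ ∑ l, q l * PA a x l * PB b y l) x y =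
      ∑ l, q l * (outcomeMean (PA · x l) * outcomeMean (PB · y l)) := by
  simp only [correlator, outcomeMean, Fintype.sum_bool, Finset.mul_sum, ← Finset.sum_add_distrib]
  exact Finset.sum_congr rfl fun l _ ↦ by ring

section LinearOrderedRing

variable {R : Type*} [CommRing R] [LinearOrder R] [IsStrictOrderedRing R]

theorem abs_add_add_abs_sub_le_two {s t : R} (hs : |s| ≤ 1) (ht : |t| ≤ 1) :
    |s + t| + |s - t| ≤ 2 := by
  rw [abs_le] at hs ht
  rcases abs_cases (s + t) with h | h <;> rcases abs_cases (s - t) with h' | h' <;> linarith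

theorem chsh_le_two_of_abs_le_one {u₀ u₁ v₀ v₁ : R} (hu₀ : |u₀| ≤ 1) (hu₁ : |u₁| ≤ 1)
    (hv₀ : |v₀| ≤ 1) (hv₁ : |v₁| ≤ 1) : u₀ * v₀ + u₀ * v₁ + u₁ * v₀ - u₁ * v₁ ≤ 2 := by
  have mul_le_abs {u : R} (hu : |u| ≤ 1) (t : R) : u * t ≤ |t| :=
    calc u * t ≤ |u| * |t| := (le_abs_self _).trans_eq (abs_mul u t)
      _ ≤ |t| := mul_le_of_le_one_left (abs_nonneg t) hu
  calc u₀ * v₀ + u₀ * v₁ + u₁ * v₀ - u₁ * v₁ = u₀ * (v₀ + v₁) + u₁ * (v₀ - v₁) := by ring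
    _ ≤ |v₀ + v₁| + |v₀ - v₁| := add_le_add (mul_le_abs hu₀ _) (mul_le_abs hu₁ _)
    _ ≤ 2 := abs_add_add_abs_sub_le_two hv₀ hv₁

end LinearOrderedRing

theorem IsClassical.chsh_le_two {P : Bool → Bool → Bool → Bool → ℝ} (hP : IsClassical P) :
    chsh P ≤ 2 := by
  obtain ⟨n, -, q, PA, PB, hq, hq_sum, hPA, hPA_sum, hPB, hPB_sum, hP⟩ := hP
  obtain rfl : P = fun a b x y ↦ ∑ l, q l * PA a x l * PB b y l := by
    funext a b x y
    exact hP a b x y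
  let u (x : Bool) (l : Fin n) : ℝ := outcomeMean (PA · x l)
  let v (y : Bool) (l : Fin n) : ℝ := outcomeMean (PB · y l)
  have hu (x l) : |u x l| ≤ 1 := abs_outcomeMean_le_one (hPA · x l) (hPA_sum x l)
  have hv (y l) : |v y l| ≤ 1 := abs_outcomeMean_le_one (hPB · y l) (hPB_sum y l)
  calc chsh (fun a b x y ↦ ∑ l, q l * PA a x l * PB b y l)
    _ = ∑ l, q l * (u false l * v false l + u false l * v true l + u true l * v false l -
          u true l * v true l) := by
        simp only [chsh, correlator_sum_mul_mul, mul_sub, mul_add, Finset.sum_sub_distrib,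
          Finset.sum_add_distrib, u, v]
    _ ≤ ∑ l, q l * 2 := Finset.sum_le_sum fun l _ ↦ mul_le_mul_of_nonneg_left
        (chsh_le_two_of_abs_le_one (hu _ l) (hu _ l) (hv _ l) (hv _ l)) (hq l)
    _ = 2 := by rw [← Finset.sum_mul, hq_sum, one_mul]

end Classical

section Quantum

theorem trace_mul_nonneg_of_posSemidef {𝕜 n : Type*} [RCLike 𝕜] [Fintype n] {A B : Matrix n n 𝕜}
    (hA : A.PosSemidef) (hB : B.PosSemidef) : 0 ≤ (A * B).trace := by
  classical
  open scoped MatrixOrder in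
  obtain ⟨C, rfl⟩ := CStarAlgebra.nonneg_iff_eq_star_mul_self.mp hB.nonneg
  rw [Matrix.trace_mul_comm, mul_assoc, Matrix.trace_mul_comm]
  exact (hA.mul_mul_conjTranspose_same C).trace_nonneg

theorem IsQuantum.isProbTable {P : Bool → Bool → Bool → Bool → ℝ} (hP : IsQuantum P) :
    IsProbTable P := by
  obtain ⟨dA, dB, -, -, ρ, E, F, hρ, hρ_trace, hE, hE_sum, hF, hF_sum, hP⟩ := hP
  refine ⟨fun a b x y ↦ ?_, fun x y ↦ ?_⟩
  · have htrace := trace_mul_nonneg_of_posSemidef hρ ((hE x a).kronecker (hF y b))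
    rwa [← hP, Complex.zero_le_real] at htrace
  · have hresolution : ∑ a, ∑ b, E x a ⊗ₖ F y b = 1 := by
      simp only [Fintype.sum_bool, ← Matrix.kronecker_add, ← Matrix.add_kronecker]
      rw [add_comm (E x true), add_comm (F y true), hE_sum, hF_sum, Matrix.one_kronecker_one]
    have hsum : ((∑ a, ∑ b, P a b x y : ℝ) : ℂ) = 1 := by
      push_cast
      simp only [hP, ← Matrix.trace_sum, ← Matrix.mul_sum, hresolution, mul_one, hρ_trace]
    exact_mod_cast hsum

section OutcomeProjection

variable {R : Type*} [Ring R] [Algebra ℝ R]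

/-- The spectral projection `(1 ± A) / 2` of a `±1`-valued observable `A`, that is, of a
self-adjoint `A` with `A * A = 1`, onto the eigenspace of `sgn a`. -/
noncomputable def outcomeProjection (A : R) (a : Bool) : R := (2 : ℝ)⁻¹ • (1 + sgn a • A)

theorem outcomeProjection_false_add_true (A : R) :
    outcomeProjection A false + outcomeProjection A true = 1 := by
  simp only [outcomeProjection, sgn, Bool.false_eq_true, if_true, if_false]
  module

theorem sum_sgn_smul_outcomeProjection (A : R) : ∑ a, sgn a • outcomeProjection A a = A := by
  simp only [outcomeProjection, sgn, Fintype.sum_bool, Bool.false_eq_true, if_true, if_false]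
  module

theorem sgn_mul_self (a : Bool) : sgn a * sgn a = 1 := by
  cases a <;> simp [sgn]

theorem isStarProjection_outcomeProjection [StarRing R] [StarModule ℝ R] {A : R}
    (hA : IsSelfAdjoint A) (hA_sq : A * A = 1) (a : Bool) :
    IsStarProjection (outcomeProjection A a) where
  isIdempotentElem := by
    have hsq : (1 + sgn a • A) * (1 + sgn a • A) = (2 : ℝ) • (1 + sgn a • A) := by
      simp only [add_mul, mul_add, one_mul, mul_one, smul_mul_smul_comm, sgn_mul_self, hA_sq]
      module
    rw [IsIdempotentElem, outcomeProjection, smul_mul_smul_comm, hsq]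
    module
  isSelfAdjoint := .smul (.all _) ((IsSelfAdjoint.one R).add (.smul (.all _) hA))

end OutcomeProjection

theorem posSemidef_outcomeProjection {𝕜 n : Type*} [RCLike 𝕜] [Fintype n] [DecidableEq n]
    {A : Matrix n n 𝕜} (hA : A.IsHermitian) (hA_sq : A * A = 1) (a : Bool) :
    (outcomeProjection A a).PosSemidef := by
  open scoped MatrixOrder in
  exact Matrix.nonneg_iff_posSemidef.mp
    (isStarProjection_outcomeProjection hA.isSelfAdjoint hA_sq a).nonneg

section QuantumTable

variable {m n : Type*} [Fintype m] [Fintype n] [DecidableEq m] [DecidableEq n]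

/-- The table obtained when the two parties measure the `±1`-valued observables `A x` and `B y` on
the bipartite state `ρ`. The trace is real for the intended arguments; taking its real part makes
the definition meaningful for all matrices. -/
noncomputable def quantumTable (ρ : Matrix (m × n) (m × n) ℂ) (A : Bool → Matrix m m ℂ)
    (B : Bool → Matrix n n ℂ) (a b x y : Bool) : ℝ :=
  (ρ * (outcomeProjection (A x) a ⊗ₖ outcomeProjection (B y) b)).trace.re

theorem correlator_quantumTable (ρ : Matrix (m × n) (m × n) ℂ) (A : Bool → Matrix m m ℂ)
    (B : Bool → Matrix n n ℂ) (x y : Bool) :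
    correlator (quantumTable ρ A B) x y = (ρ * (A x ⊗ₖ B y)).trace.re := by
  conv_rhs =>
    rw [← sum_sgn_smul_outcomeProjection (A x), ← sum_sgn_smul_outcomeProjection (B y)]
  simp only [correlator, quantumTable, Fintype.sum_bool, Matrix.add_kronecker,
    Matrix.kronecker_add, Matrix.smul_kronecker, Matrix.kronecker_smul, mul_add, Matrix.mul_smul,
    Matrix.trace_add, Matrix.trace_smul, Complex.add_re, Complex.smul_re, smul_eq_mul]
  ring

end QuantumTable

theorem isQuantum_quantumTable {dA dB : ℕ} {ρ : Matrix (Fin dA × Fin dB) (Fin dA × Fin dB) ℂ}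
    {A : Bool → Matrix (Fin dA) (Fin dA) ℂ} {B : Bool → Matrix (Fin dB) (Fin dB) ℂ}
    (hρ : ρ.PosSemidef) (hρ_trace : ρ.trace = 1)
    (hA : ∀ x, (A x).IsHermitian) (hA_sq : ∀ x, A x * A x = 1)
    (hB : ∀ y, (B y).IsHermitian) (hB_sq : ∀ y, B y * B y = 1) :
    IsQuantum (quantumTable ρ A B) := by
  obtain ⟨i, j⟩ : Nonempty (Fin dA × Fin dB) := by
    by_contra! hempty
    simp [Matrix.trace] at hρ_trace
  have hE (x a) := posSemidef_outcomeProjection (hA x) (hA_sq x) a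
  have hF (y b) := posSemidef_outcomeProjection (hB y) (hB_sq y) b
  refine ⟨dA, dB, i.pos, j.pos, ρ, fun x ↦ outcomeProjection (A x),
    fun y ↦ outcomeProjection (B y), hρ, hρ_trace, hE, fun x ↦ outcomeProjection_false_add_true _,
    hF, fun y ↦ outcomeProjection_false_add_true _, fun a b x y ↦ ?_⟩
  exact (Complex.eq_re_of_ofReal_le
    (trace_mul_nonneg_of_posSemidef hρ ((hE x a).kronecker (hF y b)))).symm

section MaxEntangledState

open scoped Matrix

variable (n : Type*) [Fintype n] [DecidableEq n]

/-- The maximally entangled state on two copies of `ℂⁿ`: the rank-one projection onto the unit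
vector `n^(-1/2) ∑ i, eᵢ ⊗ eᵢ`, where `∑ i, eᵢ ⊗ eᵢ` is the vectorization of the identity matrix. -/
noncomputable def maxEntangledState : Matrix (n × n) (n × n) ℂ :=
  (Fintype.card n : ℂ)⁻¹ •
    Matrix.vecMulVec (Matrix.vec (1 : Matrix n n ℂ)) (star (Matrix.vec (1 : Matrix n n ℂ)))

theorem posSemidef_maxEntangledState : (maxEntangledState n).PosSemidef :=
  (Matrix.posSemidef_vecMulVec_self_star _).smul (by positivity)

variable {n}

theorem trace_maxEntangledState_mul_kronecker (A B : Matrix n n ℂ) :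
    (maxEntangledState n * (A ⊗ₖ B)).trace = (Fintype.card n : ℂ)⁻¹ * (Aᵀ * B).trace := by
  rw [maxEntangledState, Matrix.smul_mul, Matrix.trace_smul, Matrix.vecMulVec_mul,
    Matrix.trace_vecMulVec, dotProduct_comm, ← Matrix.dotProduct_mulVec,
    Matrix.kronecker_mulVec_vec, Matrix.star_vec_dotProduct_vec, Matrix.conjTranspose_one, one_mul,
    mul_one, Matrix.trace_mul_comm, smul_eq_mul]

theorem trace_maxEntangledState [Nonempty n] : (maxEntangledState n).trace = 1 := by
  simpa using trace_maxEntangledState_mul_kronecker (1 : Matrix n n ℂ) 1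

end MaxEntangledState

end Quantum

section Spin

open Real
open scoped Matrix

/-- The spin observable `cos θ • Z + sin θ • X` of a qubit, where `X` and `Z` are the Pauli
matrices. -/
noncomputable def spinObservable (θ : ℝ) : Matrix (Fin 2) (Fin 2) ℂ :=
  !![(cos θ : ℂ), (sin θ : ℂ); (sin θ : ℂ), -(cos θ : ℂ)]

theorem isSymm_spinObservable (θ : ℝ) : (spinObservable θ).IsSymm := by
  ext i j
  fin_cases i <;> fin_cases j <;> rfl

theorem isHermitian_spinObservable (θ : ℝ) : (spinObservable θ).IsHermitian := by
  ext i j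
  fin_cases i <;> fin_cases j <;> simp [spinObservable, -Complex.ofReal_cos, -Complex.ofReal_sin]

theorem spinObservable_mul_self (θ : ℝ) : spinObservable θ * spinObservable θ = 1 := by
  have hcircle : (cos θ : ℂ) * cos θ + sin θ * sin θ = 1 := by
    exact_mod_cast (by linarith [cos_sq_add_sin_sq θ] : cos θ * cos θ + sin θ * sin θ = 1)
  rw [spinObservable, Matrix.mul_fin_two, Matrix.one_fin_two, neg_mul_neg, hcircle,
    add_comm (sin θ * sin θ : ℂ), hcircle]
  congr <;> ring

theorem trace_transpose_spinObservable_mul (θ φ : ℝ) :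
    ((spinObservable θ)ᵀ * spinObservable φ).trace = (2 * cos (θ - φ) : ℝ) := by
  rw [(isSymm_spinObservable θ).eq, spinObservable, spinObservable, Matrix.mul_fin_two,
    Matrix.trace_fin_two_of, cos_sub]
  push_cast
  ring

/-- The table obtained by measuring the spin observables of angles `θ x` and `φ y` on a maximally
entangled pair of qubits. -/
noncomputable def spinTable (θ φ : Bool → ℝ) : Bool → Bool → Bool → Bool → ℝ :=
  quantumTable (maxEntangledState (Fin 2)) (fun x ↦ spinObservable (θ x))
    (fun y ↦ spinObservable (φ y))

theorem isQuantum_spinTable (θ φ : Bool → ℝ) : IsQuantum (spinTable θ φ) :=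
  isQuantum_quantumTable (posSemidef_maxEntangledState _) trace_maxEntangledState
    (fun _ ↦ isHermitian_spinObservable _) (fun _ ↦ spinObservable_mul_self _)
    (fun _ ↦ isHermitian_spinObservable _) (fun _ ↦ spinObservable_mul_self _)

theorem correlator_spinTable (θ φ : Bool → ℝ) (x y : Bool) :
    correlator (spinTable θ φ) x y = cos (θ x - φ y) := by
  rw [spinTable, correlator_quantumTable, trace_maxEntangledState_mul_kronecker,
    trace_transpose_spinObservable_mul, Fintype.card_fin, Nat.cast_ofNat, Complex.ofReal_mul,
    Complex.ofReal_ofNat, inv_mul_cancel_left₀ two_ne_zero, Complex.ofReal_re]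

theorem exists_chsh_spinTable_eq_two_mul_sqrt_two :
    ∃ θ φ : Bool → ℝ, chsh (spinTable θ φ) = 2 * √2 := by
  refine ⟨fun x ↦ bif x then π / 2 else 0, fun y ↦ bif y then -(π / 4) else π / 4, ?_⟩
  have hcos : cos (π / 2 + π / 4) = -(√2 / 2) := by
    rw [add_comm, cos_add_pi_div_two, sin_pi_div_four]
  have hcos' : cos (π / 2 - π / 4) = √2 / 2 := by rw [cos_pi_div_two_sub, sin_pi_div_four]
  simp only [chsh, correlator_spinTable, cond_true, cond_false, zero_sub, sub_neg_eq_add, zero_add,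
    cos_neg, cos_pi_div_four, hcos, hcos']
  ring

end Spin

/-- the Tsirelson bound is attained by a quantum probability table, and
in particular (since `2√2 > 2`) there is a quantum table that is not classical. -/
theorem tsirelson_bound_attained :
    (∃ P : Bool → Bool → Bool → Bool → ℝ,
      IsProbTable P ∧ IsQuantum P ∧ chsh P = 2 * Real.sqrt 2) ∧
    (2 : ℝ) < 2 * Real.sqrt 2 ∧
    (∃ P : Bool → Bool → Bool → Bool → ℝ,
      IsProbTable P ∧ IsQuantum P ∧ ¬ IsClassical P) := by
  obtain ⟨θ, φ, hchsh⟩ := exists_chsh_spinTable_eq_two_mul_sqrt_two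
  have hquantum : IsQuantum (spinTable θ φ) := isQuantum_spinTable θ φ
  have hlt : (2 : ℝ) < 2 * Real.sqrt 2 := by linarith [Real.one_lt_sqrt_two]
  have hnot : ¬ IsClassical (spinTable θ φ) := fun hclassical ↦
    (hchsh ▸ hlt).not_ge hclassical.chsh_le_two
  exact ⟨⟨_, hquantum.isProbTable, hquantum, hchsh⟩, hlt, _, hquantum.isProbTable, hquantum, hnot⟩
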